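/- arXiv:2605.00463 — 2 statements merged into one kernel-verified Lean document; each statement's English description precedes it below -/
import Mathlib

section
/- Let k be a field, n ∈ ℕ, and let S be a k-subalgebra of the polynomial ring k[x₁,…,xₙ] generated by a (possibly infinite) set of monomials, i.e., S = Algebra.adjoin k G where every element of G is of the form monomial α 1 for some exponent vector α ∈ ℕⁿ. Grade S by S_m = S ∩ (homogeneous polynomials of total degree m), a k-submodule of S. Then S is a Hilbert–Serre ring and dim(S) = trdeg_k(S) = d(S): the Krull dimension of S, the transcendence degree of S over k, and the Hilbert–Serre dimension of S all coincide. -/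
set_option maxHeartbeats 1000000
set_option synthInstance.maxHeartbeats 400000

/-- The boundedness condition defining Hilbert–Serre rings: for all `t ∈ (0,1)` the
Poincaré series `∑ F n * tⁿ` converges and `(1 - t) ^ d` times its sum is bounded by a
uniform constant `C > 0`. -/
def HSBound (F : ℕ → ℕ) (d : ℕ) : Prop :=
  ∃ C : ℝ, 0 < C ∧ ∀ t : ℝ, t ∈ Set.Ioo (0 : ℝ) 1 →
    Summable (fun n => (F n : ℝ) * t ^ n) ∧
      (1 - t) ^ d * (∑' n, (F n : ℝ) * t ^ n) ≤ C

/-- The transcendence degree of a commutative `k`-algebra `R`: the supremum of the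
cardinalities of subsets of `R` that are algebraically independent over `k`. -/
noncomputable def trdeg (k : Type*) (R : Type*) [CommRing k] [CommRing R] [Algebra k R] :
    Cardinal :=
  ⨆ s : {s : Set R // AlgebraicIndependent k ((↑) : s → R)}, Cardinal.mk s.1


open scoped ENNReal

theorem krull_indep_step (k : Type*) [Field k] (R : Type*) [CommRing R] [IsDomain R] [Algebra k R]
    (P : Ideal R) [P.IsPrime] (hP : P ≠ ⊥) (d : ℕ) (y : Fin d → R ⧸ P)
    (hy : AlgebraicIndependent k y) : ∃ z : Fin (d+1) → R, AlgebraicIndependent k z := by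
  obtain ⟨f, hfP, hf0⟩ := Submodule.exists_mem_ne_zero_of_ne_bot hP
  choose y' hy' using fun i => Ideal.Quotient.mk_surjective (y i)
  have hcomp : (Ideal.Quotient.mkₐ k P) ∘ y' = y := by
    ext i; exact hy' i
  have h1 : AlgebraicIndependent k y' := by
    apply AlgebraicIndependent.of_comp (Ideal.Quotient.mkₐ k P)
    rw [hcomp]; exact hy
  have h2 : Transcendental (Algebra.adjoin k (Set.range y')) f := by
    intro halg
    apply Ideal.comap_ne_bot_of_algebraic_mem hf0 hfP halg
    rw [eq_bot_iff]
    rintro ⟨a, ha⟩ haP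
    have haP : a ∈ P := haP
    rw [Algebra.adjoin_range_eq_range_aeval] at ha
    obtain ⟨p, rfl⟩ := ha
    have : MvPolynomial.aeval y p = 0 := by
      have h5 : MvPolynomial.aeval (fun i => Ideal.Quotient.mkₐ k P (y' i)) p =
          Ideal.Quotient.mkₐ k P (MvPolynomial.aeval y' p) := by
        rw [← MvPolynomial.comp_aeval]; rfl
      rw [← hcomp]
      refine h5.trans ?_
      exact Ideal.Quotient.eq_zero_iff_mem.2 haP
    have hp : p = 0 := (injective_iff_map_eq_zero _).1 hy p this
    subst hp
    exact (Submodule.mem_bot _).2 (Subtype.ext (map_zero _))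
  have h3 := (AlgebraicIndependent.option_iff (R := k) (x := y') (a := f)).2 ⟨h1, h2⟩
  exact ⟨_, h3.comp _ (finSuccEquiv d).injective⟩

theorem krull_indep (k : Type*) [Field k] (d : ℕ) : ∀ (R : Type*) [CommRing R] [IsDomain R]
    [Algebra k R], (d : WithBot ℕ∞) ≤ ringKrullDim R →
    ∃ z : Fin d → R, AlgebraicIndependent k z := by
  induction d with
  | zero =>
    intro R _ _ _ _
    refine ⟨Fin.elim0, ?_⟩
    rw [algebraicIndependent_empty_type_iff]
    exact FaithfulSMul.algebraMap_injective k R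
  | succ d ih =>
    intro R _ _ _ h
    obtain ⟨l, hl⟩ := Order.le_krullDim_iff.1 h
    have h0 : 0 < l.length := by omega
    let i1 : Fin (l.length + 1) := ⟨1, by omega⟩
    let P := (l i1).asIdeal
    have hP : P ≠ ⊥ := by
      have : l 0 < l i1 := l.strictMono (by simp [Fin.lt_def, i1])
      intro hb
      have h2 : (l 0).asIdeal < P := this
      rw [hb] at h2
      exact not_lt_bot h2
    have : P.IsPrime := (l i1).isPrime
    have hdim : (d : WithBot ℕ∞) ≤ ringKrullDim (R ⧸ P) := by
      rw [ringKrullDim_quotient]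
      refine Order.le_krullDim_iff.2 ⟨⟨d, fun j => ⟨l ⟨j.1 + 1, by omega⟩, ?_⟩, ?_⟩, rfl⟩
      · have : l i1 ≤ l ⟨j.1 + 1, by omega⟩ := l.strictMono.monotone (by simp [Fin.le_def, i1])
        exact this
      · intro j
        show l _ < l _
        exact l.strictMono (by simp [Fin.lt_def])
    obtain ⟨y, hy⟩ := ih (R ⧸ P) hdim
    exact krull_indep_step k R P hP d y hy

theorem exists_minor {n : ℕ} (M : Set (Fin n →₀ ℕ)) :
    ∃ (r : ℕ) (J : Fin r → Fin n) (v : Fin r → (Fin n →₀ ℕ)), (∀ i, v i ∈ M) ∧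
      (Matrix.of fun i j => ((v i (J j) : ℕ) : ℤ)).det ≠ 0 ∧
      ∀ α ∈ M, ∀ β ∈ M, (∀ j, α (J j) = β (J j)) → α = β := by
  classical
  let Q : ℕ → Prop := fun r => ∃ (J : Fin r → Fin n) (v : Fin r → (Fin n →₀ ℕ)), (∀ i, v i ∈ M) ∧
      (Matrix.of fun i j => ((v i (J j) : ℕ) : ℤ)).det ≠ 0
  have hQ0 : Q 0 := ⟨Fin.elim0, Fin.elim0, fun i => i.elim0, by simp⟩
  have hb : ∀ r, Q r → r ≤ n := by
    rintro r ⟨J, v, -, hd⟩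
    have : Function.Injective J := by
      intro a b hab
      by_contra hne
      exact hd (Matrix.det_zero_of_column_eq hne (fun i => by simp [hab]))
    simpa using Fintype.card_le_of_injective J this
  obtain ⟨r, hr, hmax⟩ : ∃ r, Q r ∧ ¬ Q (r+1) := by
    by_contra! hc
    have : ∀ r, Q r := fun r => Nat.rec hQ0 (fun r h => hc r h) r
    have := hb _ (this (n+1))
    omega
  obtain ⟨J, v, hv, hd⟩ := hr
  refine ⟨r, J, v, hv, hd, fun α hα β hβ hab => ?_⟩
  ext l
  have key : ∀ w ∈ M, (Matrix.of fun i j => (((Fin.cons w v : Fin (r+1) → (Fin n →₀ ℕ)) i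
      ((Fin.cons l J : Fin (r+1) → Fin n) j) : ℕ) : ℤ)).det = 0 := by
    intro w hw
    by_contra hne
    exact hmax ⟨_, _, fun i => by refine Fin.cases ?_ ?_ i <;> simp [hw, hv], hne⟩
  have ha := key α hα
  have hb := key β hβ
  rw [Matrix.det_succ_row_zero, Fin.sum_univ_succ] at ha hb
  simp only [Matrix.of_apply, Fin.cons_zero, Fin.cons_succ, Matrix.submatrix, hab] at ha hb
  have := ha.trans hb.symm
  rw [add_left_inj] at this
  simp only [Fin.succAbove_zero, Fin.cons_succ] at this
  have h2 := mul_right_cancel₀ hd this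
  simpa using h2

theorem exists_sep {n r : ℕ} (M : AddSubmonoid (Fin n →₀ ℕ)) (J : Fin r → Fin n)
    (v : Fin r → (Fin n →₀ ℕ)) (hv : ∀ i, v i ∈ M)
    (hd : (Matrix.of fun i j => ((v i (J j) : ℕ) : ℤ)).det ≠ 0) (i : Fin r) :
    ∃ α ∈ M, ∃ β ∈ M, (∀ j, j ≠ i → α (J j) = β (J j)) ∧ α (J i) ≠ β (J i) := by
  set N := (Matrix.of fun i j => ((v i (J j) : ℕ) : ℤ)) with hN
  have h := Matrix.adjugate_mul N
  refine ⟨∑ l, (N.adjugate i l).toNat • v l, sum_mem fun l _ => M.nsmul_mem (hv l) _,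
    ∑ l, (-N.adjugate i l).toNat • v l, sum_mem fun l _ => M.nsmul_mem (hv l) _, ?_⟩
  have key : ∀ j, (((∑ l, (N.adjugate i l).toNat • v l) (J j) : ℕ) : ℤ) -
      (((∑ l, (-N.adjugate i l).toNat • v l) (J j) : ℕ) : ℤ) = if i = j then N.det else 0 := by
    intro j
    have := congrFun (congrFun h i) j
    rw [Matrix.mul_apply] at this
    simp only [Matrix.smul_apply, Matrix.one_apply, smul_eq_mul, mul_ite, mul_one, mul_zero] at this
    rw [← this]
    simp only [Finsupp.finsetSum_apply, Finsupp.smul_apply, smul_eq_mul]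
    push_cast
    rw [← Finset.sum_sub_distrib]
    refine Finset.sum_congr rfl fun l _ => ?_
    rw [← sub_mul]
    congr 1
    omega
  constructor
  · intro j hj
    have := key j
    rw [if_neg (Ne.symm hj)] at this
    omega
  · have := key i
    rw [if_pos rfl] at this
    intro hc
    rw [hc, sub_self] at this
    exact hd this.symm

theorem comb_inj {n r : ℕ} (J : Fin r → Fin n)
    (v : Fin r → (Fin n →₀ ℕ)) 
    (hd : (Matrix.of fun i j => ((v i (J j) : ℕ) : ℤ)).det ≠ 0) :
    Function.Injective (fun c : Fin r → ℕ => ∑ i, c i • v i) := by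
  intro c c' hcc
  set N := (Matrix.of fun i j => ((v i (J j) : ℕ) : ℤ)) with hN
  have : Matrix.vecMul (fun i => ((c i : ℕ) : ℤ) - c' i) N = 0 := by
    ext j
    have := congrArg (fun w : Fin n →₀ ℕ => ((w (J j) : ℕ) : ℤ)) hcc
    simp only [Finsupp.finsetSum_apply, Finsupp.smul_apply, smul_eq_mul] at this
    push_cast at this
    simp only [Matrix.vecMul, dotProduct, hN, Matrix.of_apply, sub_mul, Finset.sum_sub_distrib, this]
    simp
  have := Matrix.eq_zero_of_vecMul_eq_zero hd this
  ext i
  have := congrFun this i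
  simp at this
  omega

theorem pi_geom (q : ℝ≥0∞) (r : ℕ) :
    ∑' c : Fin r → ℕ, q ^ (∑ i, c i) = ((1 - q)⁻¹) ^ r := by
  induction r with
  | zero => simp
  | succ r ih =>
    rw [← (Fin.consEquiv (fun _ => ℕ)).tsum_eq, ENNReal.tsum_prod']
    simp only [Fin.consEquiv_apply, Fin.sum_univ_succ, Fin.cons_zero, Fin.cons_succ, pow_add,
      ENNReal.tsum_mul_left, ENNReal.tsum_mul_right, ih, ENNReal.tsum_geometric]
    rw [pow_one, mul_comm]

/-- series over the monoid -/
theorem series_eq {n : ℕ} (M : Set (Fin n →₀ ℕ)) (F : ℕ → ℕ)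
    (hF : ∀ m, Nat.card {α : Fin n →₀ ℕ | α ∈ M ∧ α.degree = m} = F m)
    (hfin : ∀ m, {α : Fin n →₀ ℕ | α ∈ M ∧ α.degree = m}.Finite) (q : ℝ≥0∞) :
    ∑' α : M, q ^ (α : Fin n →₀ ℕ).degree = ∑' m, (F m : ℝ≥0∞) * q ^ m := by
  rw [← (Equiv.sigmaFiberEquiv (fun α : M => (α : Fin n →₀ ℕ).degree)).tsum_eq,
    ENNReal.tsum_sigma']
  refine tsum_congr fun m => ?_
  have h1 : ∀ x : {α : M // (α : Fin n →₀ ℕ).degree = m},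
      q ^ ((Equiv.sigmaFiberEquiv (fun α : M => (α : Fin n →₀ ℕ).degree) ⟨m, x⟩ : M) :
        Fin n →₀ ℕ).degree = q ^ m := by
    intro x
    have := x.2
    simp only [Equiv.sigmaFiberEquiv, Equiv.coe_fn_mk]
    rw [this]
  rw [tsum_congr h1]
  have e : {α : M // (α : Fin n →₀ ℕ).degree = m} ≃
      {α : Fin n →₀ ℕ | α ∈ M ∧ α.degree = m} :=
    Equiv.subtypeSubtypeEquivSubtypeInter (fun α => α ∈ M) (fun α => α.degree = m)
  have := (hfin m).to_subtype
  rw [← e.symm.tsum_eq]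
  rw [ENNReal.tsum_const, ← hF m, ENat.card_eq_coe_natCard]
  rfl

theorem series_upper {n r : ℕ} (M : Set (Fin n →₀ ℕ)) (J : Fin r → Fin n)
    (hJ : Function.Injective J)
    (hinj : ∀ α ∈ M, ∀ β ∈ M, (∀ j, α (J j) = β (J j)) → α = β)
    (q : ℝ≥0∞) (hq : q ≤ 1) :
    ∑' α : M, q ^ (α : Fin n →₀ ℕ).degree ≤ ((1 - q)⁻¹) ^ r := by
  rw [← pi_geom]
  let g : M → (Fin r → ℕ) := fun α j => (α : Fin n →₀ ℕ) (J j)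
  have hg : Function.Injective g := by
    intro α β h
    exact Subtype.ext (hinj _ α.2 _ β.2 (fun j => congrFun h j))
  refine le_trans ?_ (ENNReal.tsum_comp_le_tsum_of_injective hg (fun c => q ^ (∑ i, c i)))
  refine ENNReal.tsum_le_tsum fun α => ?_
  refine pow_le_pow_right_of_le_one' hq ?_
  rw [Finsupp.degree_eq_sum]
  show ∑ i, (α : Fin n →₀ ℕ) (J i) ≤ _
  rw [← Finset.sum_image (s := Finset.univ) (g := J) (f := fun l => (α : Fin n →₀ ℕ) l)
    (fun a _ b _ h => hJ h)]
  exact Finset.sum_le_sum_of_subset (Finset.subset_univ _)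

theorem series_lower {n r : ℕ} (M : AddSubmonoid (Fin n →₀ ℕ)) (v : Fin r → (Fin n →₀ ℕ))
    (hv : ∀ i, v i ∈ M)
    (hinj : Function.Injective (fun c : Fin r → ℕ => ∑ i, c i • v i))
    (q : ℝ≥0∞) (hq : q ≤ 1) (D : ℕ) (hD : ∀ i, (v i).degree ≤ D) :
    ((1 - q ^ D)⁻¹) ^ r ≤ ∑' α : (M : Set (Fin n →₀ ℕ)), q ^ (α : Fin n →₀ ℕ).degree := by
  rw [← pi_geom]
  let g : (Fin r → ℕ) → (M : Set (Fin n →₀ ℕ)) := fun c =>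
    ⟨∑ i, c i • v i, sum_mem fun l _ => M.nsmul_mem (hv l) _⟩
  have hg : Function.Injective g := by
    intro c c' h
    exact hinj (congrArg Subtype.val h)
  refine le_trans ?_ (ENNReal.tsum_comp_le_tsum_of_injective hg
    (fun α => q ^ (α : Fin n →₀ ℕ).degree))
  refine ENNReal.tsum_le_tsum fun c => ?_
  rw [← pow_mul]
  refine pow_le_pow_right_of_le_one' hq ?_
  show (∑ i, c i • v i).degree ≤ _
  rw [map_sum, Finset.mul_sum]
  refine Finset.sum_le_sum fun i _ => ?_
  rw [map_nsmul, smul_eq_mul, mul_comm]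
  exact Nat.mul_le_mul_right _ (hD i)

theorem hs_upper (F : ℕ → ℕ) (r : ℕ)
    (h : ∀ q : ℝ≥0∞, q ≤ 1 → ∑' m, (F m : ℝ≥0∞) * q ^ m ≤ ((1 - q)⁻¹) ^ r) : HSBound F r := by
  refine ⟨1, one_pos, fun t ht => ?_⟩
  have ht0 : 0 < t := ht.1
  have ht1 : 0 < 1 - t := by linarith [ht.2]
  have h1 := h (ENNReal.ofReal t) (by simpa using ht.2.le)
  have e1 : ∀ m, (F m : ℝ≥0∞) * ENNReal.ofReal t ^ m = ENNReal.ofReal ((F m : ℝ) * t ^ m) := by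
    intro m
    rw [ENNReal.ofReal_mul (by positivity), ENNReal.ofReal_natCast, ENNReal.ofReal_pow ht0.le]
  have e2 : ((1 - ENNReal.ofReal t)⁻¹) ^ r = ENNReal.ofReal (((1 - t)⁻¹) ^ r) := by
    rw [ENNReal.ofReal_pow (by positivity), ENNReal.ofReal_inv_of_pos ht1, ENNReal.ofReal_sub _ ht0.le,
      ENNReal.ofReal_one]
  simp only [e1] at h1
  rw [e2] at h1
  have hsum : Summable (fun m => (F m : ℝ) * t ^ m) := by
    have := ENNReal.summable_toReal (lt_of_le_of_lt h1 ENNReal.ofReal_lt_top).ne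
    refine this.congr fun m => ?_
    rw [ENNReal.toReal_ofReal (by positivity)]
  refine ⟨hsum, ?_⟩
  rw [← ENNReal.ofReal_tsum_of_nonneg (fun m => by positivity) hsum,
    ENNReal.ofReal_le_ofReal_iff (by positivity)] at h1
  calc _ ≤ (1 - t) ^ r * ((1 - t)⁻¹) ^ r := by gcongr
    _ = 1 := by rw [← mul_pow, mul_inv_cancel₀ ht1.ne', one_pow]

theorem hs_lower (F : ℕ → ℕ) (r d D : ℕ) (hD : 0 < D)
    (h : ∀ q : ℝ≥0∞, q ≤ 1 → ((1 - q ^ D)⁻¹) ^ r ≤ ∑' m, (F m : ℝ≥0∞) * q ^ m)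
    (hd : HSBound F d) : r ≤ d := by
  by_contra! hlt
  obtain ⟨C, hC, hb⟩ := hd
  let u : ℝ := 1 / ((D : ℝ) ^ r * C + 2)
  have hden : 0 < (D : ℝ) ^ r * C := by positivity
  have hu0 : 0 < u := by positivity
  have hu1 : u < 1 := by
    rw [div_lt_one (by positivity)]; linarith
  obtain ⟨hsum, hle⟩ := hb (1 - u) ⟨by linarith, by linarith⟩
  set t := 1 - u with ht
  have ht0 : 0 < t := by linarith
  have ht1 : t < 1 := by linarith
  have h1 := h (ENNReal.ofReal t) (by simpa using ht1.le)
  have e1 : ∀ m, (F m : ℝ≥0∞) * ENNReal.ofReal t ^ m = ENNReal.ofReal ((F m : ℝ) * t ^ m) := by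
    intro m
    rw [ENNReal.ofReal_mul (by positivity), ENNReal.ofReal_natCast, ENNReal.ofReal_pow ht0.le]
  have htD : 0 < 1 - t ^ D := by
    have := pow_lt_one₀ ht0.le ht1 hD.ne'
    linarith
  have e2 : ((1 - ENNReal.ofReal t ^ D)⁻¹) ^ r = ENNReal.ofReal (((1 - t ^ D)⁻¹) ^ r) := by
    rw [ENNReal.ofReal_pow (by positivity), ENNReal.ofReal_inv_of_pos htD,
      ENNReal.ofReal_sub 1 (q := t ^ D) (by positivity), ENNReal.ofReal_one,
      ENNReal.ofReal_pow ht0.le]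
  simp only [e1] at h1
  have hP : 0 ≤ ∑' m, (F m : ℝ) * t ^ m := tsum_nonneg fun m => by positivity
  rw [e2, ← ENNReal.ofReal_tsum_of_nonneg (fun m => by positivity) hsum,
    ENNReal.ofReal_le_ofReal_iff hP] at h1
  set P := ∑' m, (F m : ℝ) * t ^ m
  have hbern : 1 - t ^ D ≤ D * u := by
    have := one_add_mul_le_pow (a := -u) (by linarith) D
    have h3 : (1 + -u) = t := by rw [ht]; ring
    rw [h3] at this
    linarith
  have h4 : 1 ≤ (1 - t ^ D) ^ r * P := by
    calc (1:ℝ) = (1 - t ^ D) ^ r * ((1 - t ^ D)⁻¹) ^ r := by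
          rw [← mul_pow, mul_inv_cancel₀ htD.ne', one_pow]
      _ ≤ _ := by gcongr
  have h5 : (1 - t ^ D) ^ r * P ≤ (D * u) ^ r * P := by gcongr
  have h6 : u ^ r ≤ u ^ d * u := by
    rw [← pow_succ]
    exact pow_le_pow_of_le_one hu0.le hu1.le hlt
  have h7 : u ^ d * P ≤ C := by
    have : 1 - t = u := by rw [ht]; ring
    rwa [this] at hle
  have h8 : (D * u) ^ r * P ≤ (D : ℝ) ^ r * C * u := by
    calc (D * u) ^ r * P = (D : ℝ) ^ r * (u ^ r * P) := by ring
      _ ≤ (D : ℝ) ^ r * ((u ^ d * u) * P) := by gcongr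
      _ = (D : ℝ) ^ r * (u ^ d * P) * u := by ring
      _ ≤ _ := by gcongr
  have h9 : (D : ℝ) ^ r * C * u < 1 := by
    show (D : ℝ) ^ r * C * (1 / ((D : ℝ) ^ r * C + 2)) < 1
    rw [mul_one_div, div_lt_one (by positivity)]
    linarith
  linarith

theorem adjoin_mem {k : Type*} [Field k] {n : ℕ}
    (G : Set (MvPolynomial (Fin n) k))
    (hG : ∀ g ∈ G, ∃ α : Fin n →₀ ℕ, g = MvPolynomial.monomial α 1) :
    ∃ M : AddSubmonoid (Fin n →₀ ℕ), Subalgebra.toSubmodule (Algebra.adjoin k G) =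
      MvPolynomial.restrictSupport k (M : Set (Fin n →₀ ℕ)) := by
  refine ⟨((Submonoid.closure G).comap (MvPolynomial.monomialOneHom k (Fin n))).toAddSubmonoid', ?_⟩
  rw [Algebra.adjoin_eq_span, MvPolynomial.restrictSupport_eq_span]
  congr 1
  ext f
  constructor
  · intro hf
    have : Submonoid.closure G ≤ MonoidHom.mrange (MvPolynomial.monomialOneHom k (Fin n)) := by
      rw [Submonoid.closure_le]
      intro g hg
      obtain ⟨α, rfl⟩ := hG g hg
      exact ⟨Multiplicative.ofAdd α, rfl⟩
    obtain ⟨α, rfl⟩ := this hf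
    exact ⟨α.toAdd, hf, rfl⟩
  · rintro ⟨α, hα, rfl⟩
    exact hα

theorem grade_basis {k : Type*} [Field k] {n : ℕ} (S : Subalgebra k (MvPolynomial (Fin n) k))
    (M : Set (Fin n →₀ ℕ)) (hM : Subalgebra.toSubmodule S = MvPolynomial.restrictSupport k M)
    (m : ℕ) : Nonempty (Module.Basis {α : Fin n →₀ ℕ | α ∈ M ∧ α.degree = m} k
      ↥((MvPolynomial.homogeneousSubmodule (Fin n) k m).comap S.val.toLinearMap)) := by
  have hS : ∀ f, f ∈ S ↔ (f.support : Set (Fin n →₀ ℕ)) ⊆ M := by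
    intro f
    rw [← Subalgebra.mem_toSubmodule, hM, MvPolynomial.mem_restrictSupport_iff]
  have hinj : Function.Injective S.val.toLinearMap := Subtype.val_injective
  let e1 := Submodule.equivMapOfInjective S.val.toLinearMap hinj
    ((MvPolynomial.homogeneousSubmodule (Fin n) k m).comap S.val.toLinearMap)
  have heq : ((MvPolynomial.homogeneousSubmodule (Fin n) k m).comap S.val.toLinearMap).map
      S.val.toLinearMap = MvPolynomial.restrictSupport k {α : Fin n →₀ ℕ | α ∈ M ∧ α.degree = m} := by
    ext f
    rw [MvPolynomial.mem_restrictSupport_iff, Submodule.mem_map]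
    constructor
    · rintro ⟨⟨g, hg⟩, hgm, rfl⟩
      have hgm : g.IsHomogeneous m := hgm
      intro α hα
      refine ⟨(hS g).1 hg hα, ?_⟩
      have := hgm (MvPolynomial.mem_support_iff.1 hα)
      rw [Finsupp.degree_eq_weight_one]
      exact this
    · intro hf
      refine ⟨⟨f, (hS f).2 fun α hα => (hf hα).1⟩, ?_, rfl⟩
      show f.IsHomogeneous m
      intro α hα
      have := (hf (MvPolynomial.mem_support_iff.2 hα)).2
      rw [Finsupp.degree_eq_weight_one] at this
      exact this
  exact ⟨(MvPolynomial.basisRestrictSupport k _).map ((LinearEquiv.ofEq _ _ heq.symm).trans e1.symm)⟩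

theorem degree_finite {n : ℕ} (M : Set (Fin n →₀ ℕ)) (m : ℕ) :
    {α : Fin n →₀ ℕ | α ∈ M ∧ α.degree = m}.Finite := by
  refine Set.Finite.subset (Finsupp.finite_of_degree_le m) ?_
  rintro α ⟨-, h⟩
  exact h.le

/-- projection to the coordinates `J j`, `j ≥ i` -/
noncomputable def projJ {n r : ℕ} (J : Fin r → Fin n) (i : ℕ) : (Fin n →₀ ℕ) →+ (Fin r →₀ ℕ) where
  toFun α := Finsupp.equivFunOnFinite.symm (fun j => if i ≤ j.1 then α (J j) else 0)
  map_zero' := by ext; simp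
  map_add' α β := by ext j; by_cases h : i ≤ j.1 <;> simp [h]

theorem projJ_apply {n r : ℕ} (J : Fin r → Fin n) (i : ℕ) (α : Fin n →₀ ℕ) (j : Fin r) :
    projJ J i α j = if i ≤ j.1 then α (J j) else 0 := rfl

/-- the induced algebra map (setting variables to 1) -/
noncomputable def projAlg (k : Type*) [Field k] {n r : ℕ} (J : Fin r → Fin n) (i : ℕ) :
    MvPolynomial (Fin n) k →ₐ[k] MvPolynomial (Fin r) k :=
  AddMonoidAlgebra.mapDomainAlgHom k k (projJ J i)

theorem projAlg_monomial (k : Type*) [Field k] {n r : ℕ} (J : Fin r → Fin n) (i : ℕ)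
    (α : Fin n →₀ ℕ) (c : k) :
    projAlg k J i (MvPolynomial.monomial α c) = MvPolynomial.monomial (projJ J i α) c :=
  AddMonoidAlgebra.mapDomain_single

theorem projAlg_id (k : Type*) [Field k] {n r : ℕ} (J : Fin r → Fin n) (i i' : ℕ) (h : i ≤ i')
    (f : MvPolynomial (Fin n) k) :
    projAlg k (id : Fin r → Fin r) i' (projAlg k J i f) = projAlg k J i' f := by
  induction f using MvPolynomial.induction_on' with
  | add f g ih1 ih2 =>
    rw [map_add, map_add, map_add, ih1, ih2]
  | monomial a b =>
    simp only [projAlg_monomial]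
    refine congrArg (fun a => MvPolynomial.monomial a b) ?_
    ext j
    simp only [projJ_apply, id]
    split_ifs <;> first | rfl | omega

theorem projAlg_inj (k : Type*) [Field k] {n r : ℕ} (J : Fin r → Fin n)
    (S : Subalgebra k (MvPolynomial (Fin n) k))
    (M : Set (Fin n →₀ ℕ)) (hM : Subalgebra.toSubmodule S = MvPolynomial.restrictSupport k M)
    (hinj : ∀ α ∈ M, ∀ β ∈ M, (∀ j, α (J j) = β (J j)) → α = β) :
    Function.Injective ((projAlg k J 0).comp S.val) := by
  have hS : ∀ f, f ∈ S ↔ (f.support : Set (Fin n →₀ ℕ)) ⊆ M := by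
    intro f
    rw [← Subalgebra.mem_toSubmodule, hM, MvPolynomial.mem_restrictSupport_iff]
  have hI : Set.InjOn (projJ J 0) M := by
    intro α hα β hβ h
    refine hinj α hα β hβ fun j => ?_
    have := DFunLike.congr_fun h j
    simpa [projJ_apply] using this
  rintro ⟨f, hf⟩ ⟨g, hg⟩ h
  have h : AddMonoidAlgebra.mapDomain (projJ J 0) f = AddMonoidAlgebra.mapDomain (projJ J 0) g := h
  have h' := congrArg AddMonoidAlgebra.coeff h
  have := Finsupp.mapDomain_injOn M hI ((hS f).1 hf) ((hS g).1 hg) h'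
  exact Subtype.ext (AddMonoidAlgebra.coeff_injective this)

theorem krull_lower (k : Type*) [Field k] {n r : ℕ} (J : Fin r → Fin n)
    (S : Subalgebra k (MvPolynomial (Fin n) k))
    (M : Set (Fin n →₀ ℕ)) (hM : Subalgebra.toSubmodule S = MvPolynomial.restrictSupport k M)
    (hsep : ∀ i : Fin r, ∃ α ∈ M, ∃ β ∈ M, (∀ j, j ≠ i → α (J j) = β (J j)) ∧ α (J i) ≠ β (J i)) :
    (r : WithBot ℕ∞) ≤ ringKrullDim S := by
  have hmem : ∀ α ∈ M, MvPolynomial.monomial α (1:k) ∈ S := by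
    intro α hα
    rw [← Subalgebra.mem_toSubmodule, hM, MvPolynomial.monomial_mem_restrictSupport]
    exact Or.inl hα
  refine Order.le_krullDim_iff.2 ⟨⟨r, fun i => ⟨RingHom.ker ((projAlg k J i.1).comp S.val),
    RingHom.ker_isPrime _⟩, fun i => ?_⟩, rfl⟩
  show RingHom.ker ((projAlg k J i.1).comp S.val) < RingHom.ker ((projAlg k J (i.1+1)).comp S.val)
  refine lt_of_le_not_ge ?_ ?_
  · intro f hf
    rw [RingHom.mem_ker] at hf ⊢
    have hf : projAlg k J i.1 f = 0 := hf
    show projAlg k J (i.1+1) f = 0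
    rw [← projAlg_id k J i.1 (i.1+1) (by omega), hf, map_zero]
  · intro hle
    obtain ⟨α, hα, β, hβ, h1, h2⟩ := hsep i
    let f : S := ⟨_, hmem α hα⟩ - ⟨_, hmem β hβ⟩
    have hf : f ∈ RingHom.ker ((projAlg k J (i.1+1)).comp S.val) := by
      rw [RingHom.mem_ker]
      show projAlg k J (i.1+1) (MvPolynomial.monomial α 1 - MvPolynomial.monomial β 1) = 0
      rw [map_sub, projAlg_monomial, projAlg_monomial, sub_eq_zero]
      refine congrArg (fun a => MvPolynomial.monomial a (1 : k)) ?_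
      ext j
      rw [projJ_apply, projJ_apply]
      split_ifs with hj
      · exact h1 j (by rintro rfl; omega)
      · rfl
    have hf2 := hle hf
    rw [RingHom.mem_ker] at hf2
    have hf2 : projAlg k J i.1 (MvPolynomial.monomial α 1 - MvPolynomial.monomial β 1) = 0 := hf2
    rw [map_sub, projAlg_monomial, projAlg_monomial, sub_eq_zero] at hf2
    have h3 := MvPolynomial.monomial_left_injective (one_ne_zero) hf2
    have := DFunLike.congr_fun h3 i
    simp only [projJ_apply, le_refl, if_true] at this
    exact h2 this

theorem monomial_algebra_dims (k : Type*) [Field k] (n : ℕ)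
    (G : Set (MvPolynomial (Fin n) k))
    (hG : ∀ g ∈ G, ∃ α : Fin n →₀ ℕ, g = MvPolynomial.monomial α 1)
    (S : Subalgebra k (MvPolynomial (Fin n) k)) (hS : S = Algebra.adjoin k G)
    (F : ℕ → ℕ)
    (hF : ∀ m, F m = Module.finrank k
      ↥((MvPolynomial.homogeneousSubmodule (Fin n) k m).comap S.val.toLinearMap)) :
    (∀ m, FiniteDimensional k
        ↥((MvPolynomial.homogeneousSubmodule (Fin n) k m).comap S.val.toLinearMap)) ∧
      (∃ d, HSBound F d) ∧
      ringKrullDim ↥S = ((sInf {d : ℕ | HSBound F d} : ℕ) : WithBot ℕ∞) ∧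
      trdeg k ↥S = ((sInf {d : ℕ | HSBound F d} : ℕ) : Cardinal) := by
  obtain ⟨M, hM⟩ := adjoin_mem G hG
  rw [← hS] at hM
  have hb := grade_basis S M hM
  have hfin := degree_finite (M : Set (Fin n →₀ ℕ))
  have hcard : ∀ m, Nat.card {α : Fin n →₀ ℕ | α ∈ (M : Set (Fin n →₀ ℕ)) ∧ α.degree = m} = F m := by
    intro m
    obtain ⟨b⟩ := hb m
    rw [hF m, Module.finrank_eq_nat_card_basis b]
  obtain ⟨r, J, v, hv, hd, hinj⟩ := exists_minor (M : Set (Fin n →₀ ℕ))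
  have hJ : Function.Injective J := by
    intro a b hab
    by_contra hne
    exact hd (Matrix.det_zero_of_column_eq hne (fun i => by simp [hab]))
  have hHS : HSBound F r := by
    apply hs_upper
    intro q hq
    rw [← series_eq _ F hcard hfin]
    exact series_upper _ J hJ hinj q hq
  have hleast : IsLeast {d : ℕ | HSBound F d} r := by
    refine ⟨hHS, fun d hd' => ?_⟩
    refine hs_lower F r d (∑ i, (v i).degree + 1) (Nat.succ_pos _) (fun q hq => ?_) hd'
    rw [← series_eq _ F hcard hfin]
    refine series_lower M v hv (comb_inj J v hd) q hq _ fun i => ?_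
    exact (Finset.single_le_sum (f := fun i => (v i).degree) (fun _ _ => Nat.zero_le _)
      (Finset.mem_univ i)).trans (Nat.le_succ _)
  rw [hleast.csInf_eq]
  have htr : trdeg k S = Algebra.trdeg k S := rfl
  have h1 : (r : WithBot ℕ∞) ≤ ringKrullDim S :=
    krull_lower k J S M hM (exists_sep M J v hv hd)
  have h2 : Algebra.trdeg k S ≤ r := by
    have := trdeg_le_of_injective _ (projAlg_inj k J S M hM hinj)
    rwa [MvPolynomial.trdeg_of_isDomain, Cardinal.mk_fin, Cardinal.lift_natCast] at this
  have h3 : ∀ d : ℕ, (d : WithBot ℕ∞) ≤ ringKrullDim S → (d : Cardinal) ≤ Algebra.trdeg k S := by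
    intro d hd
    obtain ⟨z, hz⟩ := krull_indep k d S hd
    simpa using hz.lift_cardinalMk_le_trdeg
  refine ⟨fun m => ?_, ⟨r, hHS⟩, le_antisymm ?_ h1, ?_⟩
  · obtain ⟨b⟩ := hb m
    have := (hfin m).to_subtype
    exact Module.Finite.of_basis b
  · by_contra! hlt
    have h4 : ((r + 1 : ℕ) : WithBot ℕ∞) ≤ ringKrullDim S := by
      push_cast
      exact ENat.WithBot.add_one_le_iff.2 hlt
    have := (h3 _ h4).trans h2
    have := Nat.cast_le.1 this
    omega
  · rw [htr]
    exact le_antisymm h2 (h3 r h1)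
end

section
/- Let k be a field, n ∈ ℕ, and let f₁,…,f_m ∈ k[x₁,…,xₙ] be homogeneous polynomials (each homogeneous of some total degree). Let S = Algebra.adjoin k {f₁,…,f_m} be the homogeneous subalgebra they generate, let ≺ be a monomial order on the monomials of k[x₁,…,xₙ] (a MonomialOrder on Fin n), and let in_≺(S) = Algebra.adjoin k { monomial (deg_≺ g) 1 | g ∈ S, g ≠ 0 } be the initial algebra of S, where deg_≺ g is the exponent of the ≺-leading monomial of g. Then the Krull dimension and the transcendence degree over k of S and of in_≺(S) coincide: ringKrullDim S = ringKrullDim (in_≺(S)) and Algebra.trdeg k S = Algebra.trdeg k (in_≺(S)). -/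
set_option maxHeartbeats 1000000
set_option synthInstance.maxHeartbeats 400000

open scoped MonomialOrder

/-- The `≺`-leading exponent of a multivariate polynomial `g` with respect to a monomial
order `m`: the `m`-largest exponent appearing in `g` (and `0` if `g = 0`). -/
noncomputable def mdeg {k : Type*} [Field k] {n : ℕ} (m : MonomialOrder (Fin n))
    (g : MvPolynomial (Fin n) k) : Fin n →₀ ℕ :=
  m.toSyn.symm (g.support.sup m.toSyn)

theorem ia_dim_integral {R S : Type*} [CommRing R] [CommRing S] [Algebra R S]
    [Algebra.IsIntegral R S] (hinj : Function.Injective (algebraMap R S)) :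
    ringKrullDim R = ringKrullDim S := by
  apply le_antisymm
  · refine iSup_le fun l => ?_
    have : FaithfulSMul R S := (faithfulSMul_iff_algebraMap_injective R S).mpr hinj
    obtain ⟨P, hP1, hP2⟩ := Ideal.nonempty_primesOver (S := S) (RelSeries.head l).asIdeal
    obtain ⟨L, hL, -⟩ := Ideal.exists_ltSeries_of_hasGoingUp (S := S) l P
    rw [← hL]
    exact le_iSup (fun L : LTSeries (PrimeSpectrum S) => ((L.length : ℕ) : WithBot ℕ∞)) L
  · exact Order.krullDim_le_of_strictMono (PrimeSpectrum.comap (algebraMap R S))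
      (fun P Q h => Ideal.IsIntegral.comap_lt_comap (R := R) (I := P.asIdeal) (J := Q.asIdeal) h)

theorem ia_fg (k R : Type*) [Field k] [CommRing R] [IsDomain R] [Algebra k R]
    [Algebra.FiniteType k R] :
    ∃ s : ℕ, ringKrullDim R = s ∧ Algebra.trdeg k R = s := by
  obtain ⟨s, g, hg, hint⟩ := exists_integral_inj_algHom_of_fg k R
  refine ⟨s, ?_, ?_⟩
  · algebraize [g.toRingHom]
    rw [← ia_dim_integral (R := MvPolynomial (Fin s) k) (S := R) hg]
    simp
  · algebraize [g.toRingHom]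
    have : FaithfulSMul (MvPolynomial (Fin s) k) R :=
      (faithfulSMul_iff_algebraMap_injective _ R).mpr hg
    have := lift_trdeg_add_eq k (MvPolynomial (Fin s) k) R
    rw [trdeg_eq_zero (R := MvPolynomial (Fin s) k)] at this
    simpa using this.symm

/-- The Krull dimension of any domain over `k` is at most its transcendence degree. -/
theorem ia_dim_le (k R : Type*) [Field k] [CommRing R] [IsDomain R] [Algebra k R] (s : ℕ)
    (h : Algebra.trdeg k R ≤ s) : ringKrullDim R ≤ s := by
  refine iSup_le fun l => ?_
  have h1 : ∀ i : Fin l.length, ∃ x : R, x ∈ (l i.succ).asIdeal ∧ x ∉ (l i.castSucc).asIdeal := by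
    intro i
    have := l.step i
    obtain ⟨-, x, hx⟩ := SetLike.lt_iff_le_and_exists.mp (show (l i.castSucc).asIdeal < (l i.succ).asIdeal from this)
    exact ⟨x, hx⟩
  choose x hx1 hx2 using h1
  let A := Algebra.adjoin k (Set.range x)
  have : Algebra.FiniteType k A := 
    (Subalgebra.fg_iff_finiteType A).mp (Subalgebra.fg_def.mpr ⟨_, Set.finite_range x, rfl⟩)
  obtain ⟨t, ht1, ht2⟩ := ia_fg k A
  have hts : t ≤ s := by
    have := (trdeg_le_of_injective A.val Subtype.val_injective).trans h
    rw [ht2] at this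
    exact_mod_cast this
  let L : LTSeries (PrimeSpectrum A) := 
    { length := l.length
      toFun := fun i => PrimeSpectrum.comap (algebraMap A R) (l i)
      step := by
        intro i
        refine show (PrimeSpectrum.comap (algebraMap A R) (l i.castSucc)).asIdeal <
          (PrimeSpectrum.comap (algebraMap A R) (l i.succ)).asIdeal from
          SetLike.lt_iff_le_and_exists.mpr ⟨fun a ha => ?_, ⟨x i, Algebra.subset_adjoin ⟨i, rfl⟩⟩, hx1 i, hx2 i⟩
        exact (show (l i.castSucc).asIdeal < (l i.succ).asIdeal from l.step i).le ha }
  calc ((l.length : ℕ) : WithBot ℕ∞) = (L.length : ℕ) := rfl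
    _ ≤ ringKrullDim A := le_iSup (fun L : LTSeries (PrimeSpectrum A) => ((L.length : ℕ) : WithBot ℕ∞)) L
    _ = t := ht1
    _ ≤ s := by exact_mod_cast hts

/-- Krull dimension does not drop when passing to a subalgebra with the
same localization. -/
theorem ia_dim_loc (k K : Type*) [Field k] [Field K] [Algebra k K] (A : Subalgebra k K)
    (s : Finset K) (hs : ∀ x ∈ s, x ∈ A ∧ x ≠ 0)
    (hA : A ≤ Algebra.adjoin k ((s : Set K) ∪ (fun x => x⁻¹) '' s)) (d : ℕ) 
    (hd : (d : Cardinal) ≤ Algebra.trdeg k A) : (d : WithBot ℕ∞) ≤ ringKrullDim A := by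
  classical
  set T := Algebra.adjoin k ((s : Set K) ∪ (fun x => x⁻¹) '' s) with hT
  have : Algebra.FiniteType k T := 
    (Subalgebra.fg_iff_finiteType T).mp (Subalgebra.fg_def.mpr ⟨_,
      s.finite_toSet.union (s.finite_toSet.image _), rfl⟩)
  obtain ⟨t, ht1, ht2⟩ := ia_fg k T
  have h1 := hd.trans (trdeg_le_of_injective (Subalgebra.inclusion hA) (Subalgebra.inclusion_injective hA))
  rw [ht2] at h1
  have h2 : d ≤ t := by exact_mod_cast h1
  refine le_trans (by exact_mod_cast h2) (ht1.symm.le.trans ?_)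
  have key : ∀ x ∈ T, ∃ u : K, u ∈ A ∧ u ≠ 0 ∧ u⁻¹ ∈ T ∧ u * x ∈ A := by
    intro x hx
    induction hx using Algebra.adjoin_induction with
    | mem x hx =>
      rcases hx with hx | ⟨y, hy, rfl⟩
      · exact ⟨1, A.one_mem, one_ne_zero, by simp [T.one_mem], by simpa using (hs x hx).1⟩
      · exact ⟨y, (hs y hy).1, (hs y hy).2, Algebra.subset_adjoin (Or.inr ⟨y, hy, rfl⟩), 
          by simp [(hs y hy).2, A.one_mem]⟩
    | algebraMap r => exact ⟨1, A.one_mem, one_ne_zero, by simp [T.one_mem], by simp⟩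
    | add x y _ _ hx hy =>
      obtain ⟨u, hu1, hu2, hu3, hu4⟩ := hx
      obtain ⟨v, hv1, hv2, hv3, hv4⟩ := hy
      refine ⟨u * v, A.mul_mem hu1 hv1, mul_ne_zero hu2 hv2, ?_, ?_⟩
      · rw [mul_inv]; exact T.mul_mem hu3 hv3
      · have : u * v * (x + y) = v * (u * x) + u * (v * y) := by ring
        rw [this]
        exact A.add_mem (A.mul_mem hv1 hu4) (A.mul_mem hu1 hv4)
    | mul x y _ _ hx hy =>
      obtain ⟨u, hu1, hu2, hu3, hu4⟩ := hx
      obtain ⟨v, hv1, hv2, hv3, hv4⟩ := hy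
      refine ⟨u * v, A.mul_mem hu1 hv1, mul_ne_zero hu2 hv2, ?_, ?_⟩
      · rw [mul_inv]; exact T.mul_mem hu3 hv3
      · have : u * v * (x * y) = (u * x) * (v * y) := by ring
        rw [this]
        exact A.mul_mem hu4 hv4
  refine Order.krullDim_le_of_strictMono
    (PrimeSpectrum.comap (Subalgebra.inclusion hA).toRingHom) (fun P Q h => ?_)
  obtain ⟨hle, x, hxQ, hxP⟩ := SetLike.lt_iff_le_and_exists.mp (show P.asIdeal < Q.asIdeal from h)
  obtain ⟨u, hu1, hu2, hu3, hu4⟩ := key x x.2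
  refine show (PrimeSpectrum.comap (Subalgebra.inclusion hA).toRingHom P).asIdeal <
    (PrimeSpectrum.comap (Subalgebra.inclusion hA).toRingHom Q).asIdeal from
    SetLike.lt_iff_le_and_exists.mpr ⟨fun a ha => hle ha, ⟨u * x, hu4⟩, ?_, fun hc => hxP ?_⟩
  · have : (Subalgebra.inclusion hA) ⟨u * x, hu4⟩ = ⟨u, hA hu1⟩ * x := Subtype.ext rfl
    change (Subalgebra.inclusion hA) ⟨u * x, hu4⟩ ∈ Q.asIdeal
    rw [this]
    exact Q.asIdeal.mul_mem_left _ hxQ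
  · have : x = ⟨u⁻¹, hu3⟩ * (Subalgebra.inclusion hA) ⟨u * x, hu4⟩ := 
      Subtype.ext (by simp [hu2])
    rw [this]
    exact P.asIdeal.mul_mem_left _ hc

/-- The rational vector attached to an exponent. -/
def ia_vec {n : ℕ} (a : Fin n →₀ ℕ) : Fin n → ℚ := fun j => (a j : ℚ)

theorem ia_vec_inj {n : ℕ} : Function.Injective (ia_vec (n := n)) := by
  intro a b h
  ext j
  have := congrFun h j
  simpa [ia_vec] using this

/-- The set of leading exponents of a subalgebra. -/
def ia_exps {k : Type*} [Field k] {n : ℕ} (m : MonomialOrder (Fin n))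
    (A : Subalgebra k (MvPolynomial (Fin n) k)) : Set (Fin n →₀ ℕ) :=
  {a | ∃ g ∈ A, g ≠ 0 ∧ a = m.degree g}

theorem ia_algInd {k : Type*} [Field k] {n : ℕ} (m : MonomialOrder (Fin n)) {ι : Type*} [Finite ι]
    (g : ι → MvPolynomial (Fin n) k) (hg : ∀ i, g i ≠ 0)
    (hl : LinearIndependent ℚ (fun i => ia_vec (m.degree (g i)))) :
    AlgebraicIndependent k g := by
  classical
  have := Fintype.ofFinite ι
  let φ : (ι →₀ ℕ) → (Fin n →₀ ℕ) := fun c => ∑ i, c i • m.degree (g i)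
  have hφ : Function.Injective φ := by
    intro c c' h
    have h2 : ∑ i, ((c i : ℚ) - c' i) • ia_vec (m.degree (g i)) = 0 := by
      have := congrArg ia_vec h
      simp only [sub_smul, Finset.sum_sub_distrib, sub_eq_zero]
      funext j
      have := congrFun this j
      simpa [ia_vec, φ] using this
    ext i
    have := Fintype.linearIndependent_iff.mp hl _ h2 i
    rw [sub_eq_zero] at this
    exact_mod_cast this
  have hne : ∀ c : ι →₀ ℕ, ∏ i, g i ^ c i ≠ 0 := fun c =>
    Finset.prod_ne_zero_iff.mpr fun i _ => pow_ne_zero _ (hg i)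
  have hdeg : ∀ c : ι →₀ ℕ, m.degree (∏ i, g i ^ c i) = φ c := by
    intro c
    rw [MonomialOrder.degree_prod (fun i _ => pow_ne_zero _ (hg i))]
    simp [φ, MonomialOrder.degree_pow]
  rw [algebraicIndependent_iff]
  intro p hp
  by_contra hp0
  obtain ⟨c0, hc0, hmax⟩ := Finset.exists_max_image p.support (fun c => m.toSyn (φ c))
    (MvPolynomial.support_nonempty.mpr hp0)
  rw [MvPolynomial.aeval_def, MvPolynomial.eval₂_eq'] at hp
  have h3 := congrArg (MvPolynomial.coeff (φ c0)) hp
  rw [MvPolynomial.coeff_sum, Finset.sum_eq_single c0] at h3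
  · rw [MvPolynomial.algebraMap_eq, MvPolynomial.coeff_C_mul, MvPolynomial.coeff_zero, mul_eq_zero] at h3
    rcases h3 with h3 | h3
    · exact MvPolynomial.mem_support_iff.mp hc0 h3
    · rw [← hdeg, MonomialOrder.coeff_degree_eq_zero_iff] at h3
      exact hne _ h3
  · intro c hc hcc
    rw [MvPolynomial.algebraMap_eq, MvPolynomial.coeff_C_mul, m.coeff_eq_zero_of_lt, mul_zero]
    rw [hdeg]
    refine lt_of_le_of_ne (hmax c hc) fun h => hcc (hφ (m.toSyn.injective h))
  · intro h; exact absurd hc0 h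

theorem ia_coords {n : ℕ} (W : Submodule ℚ (Fin n → ℚ)) :
    ∃ J : Finset (Fin n), J.card ≤ Module.finrank ℚ W ∧
      ∀ w ∈ W, (∀ j ∈ J, w j = 0) → w = 0 := by
  classical
  let e : Fin n → Module.Dual ℚ W := fun j => (LinearMap.proj j).comp W.subtype
  obtain ⟨b, hb1, hb2, hb3⟩ := exists_linearIndependent ℚ (Set.range e)
  have hbf : b.Finite := (Set.finite_range e).subset hb1
  have := hbf.fintype
  have hex : ∀ f : b, ∃ j, e j = f := fun f => hb1 f.2
  choose j hj using hex
  refine ⟨Finset.univ.image j, ?_, ?_⟩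
  · refine Finset.card_image_le.trans ?_
    rw [Finset.card_univ, ← Subspace.dual_finrank_eq (K := ℚ) (V := W)]
    exact hb3.fintype_card_le_finrank
  · intro w hw h
    have h1 : ∀ f ∈ Submodule.span ℚ b, f ⟨w, hw⟩ = 0 := by
      intro f hf
      induction hf using Submodule.span_induction with
      | mem f hf => 
        have h0 : e (j ⟨f, hf⟩) ⟨w, hw⟩ = 0 := h _ (by simp)
        rwa [hj ⟨f, hf⟩] at h0
      | zero => simp
      | add f g _ _ hf hg => simp [hf, hg]
      | smul c f _ hf => simp [hf]
    funext i
    exact h1 (e i) (hb2 ▸ Submodule.subset_span ⟨i, rfl⟩)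

theorem ia_count {n : ℕ} (W : Submodule ℚ (Fin n → ℚ)) (E : Finset (Fin n →₀ ℕ)) (d : ℕ)
    (hE : ∀ a ∈ E, ia_vec a ∈ W ∧ ∀ j, a j ≤ d) : E.card ≤ (d + 1) ^ Module.finrank ℚ W := by
  classical
  obtain ⟨J, hJ, hJ2⟩ := ia_coords W
  have : E.card ≤ (Finset.univ : Finset (J → Fin (d + 1))).card := by
    refine Finset.card_le_card_of_injOn (fun a j => Fin.ofNat (d+1) (a j)) (by simp) ?_
    intro a ha b hb hab
    apply ia_vec_inj
    rw [← sub_eq_zero]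
    refine hJ2 _ (W.sub_mem (hE a ha).1 (hE b hb).1) fun j hj => ?_
    have h1 := congrArg Fin.val (congrFun hab ⟨j, hj⟩)
    simp only [Fin.ofNat, Nat.mod_eq_of_lt (Nat.lt_succ_of_le ((hE a ha).2 j)),
      Nat.mod_eq_of_lt (Nat.lt_succ_of_le ((hE b hb).2 j))] at h1
    simp [ia_vec, h1]
  refine this.trans ?_
  simp only [Finset.card_univ, Fintype.card_pi, Fintype.card_fin, Finset.prod_const, Fintype.card_coe]
  exact Nat.pow_le_pow_right (Nat.succ_pos _) hJ

theorem ia_count2 {k : Type*} [Field k] {n : ℕ} (m : MonomialOrder (Fin n)) 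
    (A : Subalgebra k (MvPolynomial (Fin n) k)) {κ : Type*} [Fintype κ] 
    (v : κ → MvPolynomial (Fin n) k) (hv : LinearIndependent k v) (d : ℕ)
    (hA : ∀ i, v i ∈ A) (hd : ∀ i, v i ∈ MvPolynomial.restrictDegree (Fin n) k d) :
    Fintype.card κ ≤ (d + 1) ^ Module.finrank ℚ (Submodule.span ℚ (ia_vec '' ia_exps m A)) := by
  classical
  have hfin : {a : Fin n →₀ ℕ | a ∈ ia_exps m A ∧ ∀ j, a j ≤ d}.Finite := by
    refine (Set.finite_Iic (Finsupp.equivFunOnFinite.symm (fun _ : Fin n => d))).subset ?_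
    rintro a ⟨-, ha⟩
    exact fun j => by simpa using ha j
  let E := hfin.toFinset
  let f : MvPolynomial (Fin n) k →ₗ[k] (E → k) := LinearMap.pi fun a => MvPolynomial.lcoeff k a.1
  have h1 : LinearIndependent k (f ∘ v) := by
    refine hv.map ?_
    rw [Submodule.disjoint_def]
    intro p hp hfp
    by_contra hp0
    have hp1 : p ∈ A := by
      have : Submodule.span k (Set.range v) ≤ Subalgebra.toSubmodule A := by
        rw [Submodule.span_le]; rintro _ ⟨i, rfl⟩; exact hA i
      exact this hp
    have hp2 : p ∈ MvPolynomial.restrictDegree (Fin n) k d := by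
      have : Submodule.span k (Set.range v) ≤ MvPolynomial.restrictDegree (Fin n) k d := by
        rw [Submodule.span_le]; rintro _ ⟨i, rfl⟩; exact hd i
      exact this hp
    rw [MvPolynomial.mem_restrictDegree] at hp2
    have hE : m.degree p ∈ E := by
      simp only [E, Set.Finite.mem_toFinset]
      exact ⟨⟨p, hp1, hp0, rfl⟩, hp2 _ (m.degree_mem_support hp0)⟩
    have := congrFun (LinearMap.mem_ker.mp hfp) ⟨_, hE⟩
    exact hp0 (MonomialOrder.coeff_degree_eq_zero_iff.mp this)
  refine h1.fintype_card_le_finrank.trans ?_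
  rw [Module.finrank_fintype_fun_eq_card, Fintype.card_coe]
  refine ia_count _ _ _ fun a ha => ?_
  simp only [E, Set.Finite.mem_toFinset] at ha
  exact ⟨Submodule.subset_span ⟨a, ha.1, rfl⟩, ha.2⟩

theorem ia_growth (r s C : ℕ) (h : ∀ N : ℕ, N ^ r ≤ (C * N + 1) ^ s) : r ≤ s := by
  by_contra hrs
  push Not at hrs
  set D := (C + 1) ^ s
  have h1 := h (D + 1)
  have h2 : (C * (D + 1) + 1) ^ s ≤ D * (D + 1) ^ s := by
    rw [← mul_pow]
    apply Nat.pow_le_pow_left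
    nlinarith
  have h3 : (D + 1) ^ (s + 1) ≤ (D + 1) ^ r := Nat.pow_le_pow_right (Nat.succ_pos _) hrs
  have h4 : 0 < (D + 1) ^ s := by positivity
  rw [pow_succ] at h3
  nlinarith

theorem ia_bound {k : Type*} [Field k] {n : ℕ} (m : MonomialOrder (Fin n)) 
    (A : Subalgebra k (MvPolynomial (Fin n) k)) (r : ℕ) (y : Fin r → MvPolynomial (Fin n) k)
    (hyA : ∀ i, y i ∈ A) (hy : AlgebraicIndependent k y) :
    r ≤ Module.finrank ℚ (Submodule.span ℚ (ia_vec '' ia_exps m A)) := by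
  classical
  let c : ℕ := ∑ i, ∑ j, (y i).degreeOf j
  have hc : ∀ i j, (y i).degreeOf j ≤ c := fun i j =>
    (Finset.single_le_sum (f := fun j => (y i).degreeOf j) (fun _ _ => Nat.zero_le _) 
      (Finset.mem_univ j)).trans
    (Finset.single_le_sum (f := fun i => ∑ j, (y i).degreeOf j) (fun _ _ => Nat.zero_le _) 
      (Finset.mem_univ i))
  refine ia_growth _ _ (r * c) fun N => ?_
  let v : (Fin r → Fin N) → MvPolynomial (Fin n) k := fun e => ∏ i, y i ^ (e i : ℕ)
  have hv : LinearIndependent k v := by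
    let q : (Fin r → Fin N) → (Fin r →₀ ℕ) := fun e => Finsupp.equivFunOnFinite.symm (fun i => (e i : ℕ))
    have hq : Function.Injective q := by
      intro e e' h
      funext i
      have := DFunLike.congr_fun h i
      exact Fin.ext (by simpa [q] using this)
    have h1 := ((MvPolynomial.basisMonomials (Fin r) k).linearIndependent.comp q hq).map' 
      (MvPolynomial.aeval y : MvPolynomial (Fin r) k →ₐ[k] _).toLinearMap 
      (LinearMap.ker_eq_bot.mpr hy)
    have h2 : v = (MvPolynomial.aeval y : MvPolynomial (Fin r) k →ₐ[k] _).toLinearMap ∘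
        (MvPolynomial.basisMonomials (Fin r) k) ∘ q := by
      funext e
      rw [Function.comp_apply, Function.comp_apply, MvPolynomial.coe_basisMonomials,
        AlgHom.toLinearMap_apply, MvPolynomial.aeval_monomial, map_one, one_mul,
        Finsupp.prod_fintype _ _ (by simp)]
      simp [v, q]
    rw [h2]
    exact h1
  have := ia_count2 m A v hv (r * c * N) (fun e => A.prod_mem fun i _ => A.pow_mem (hyA i) _) ?_
  · simpa using this
  · intro e
    rw [MvPolynomial.mem_restrictDegree]
    intro a ha j
    refine (MvPolynomial.monomial_le_degreeOf j ha).trans ?_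
    refine (MvPolynomial.degreeOf_prod_le _ _ _).trans ?_
    calc ∑ i, MvPolynomial.degreeOf j (y i ^ (e i : ℕ)) ≤ ∑ i : Fin r, N * c := by
          refine Finset.sum_le_sum fun i _ => (MvPolynomial.degreeOf_pow_le _ _ _).trans ?_
          exact Nat.mul_le_mul (e i).2.le (hc i j)
      _ = r * c * N := by simp; ring

theorem ia_trdeg_eq {k : Type*} [Field k] {n : ℕ} (m : MonomialOrder (Fin n)) 
    (A : Subalgebra k (MvPolynomial (Fin n) k)) :
    Algebra.trdeg k A = Module.finrank ℚ (Submodule.span ℚ (ia_vec '' ia_exps m A)) := by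
  classical
  apply le_antisymm
  · refine ciSup_le' fun s => ?_
    by_contra hlt
    push Not at hlt
    set d := Module.finrank ℚ (Submodule.span ℚ (ia_vec '' ia_exps m A))
    have h1 : ((d + 1 : ℕ) : Cardinal) ≤ Cardinal.mk s.1 := by
      rw [Nat.cast_add_one, ← Cardinal.natCast_add_one_le_iff] at *
      exact hlt
    rw [← Cardinal.lift_mk_fin, ← Cardinal.lift_id'.{0} (Cardinal.mk s.1), Cardinal.lift_mk_le'] at h1
    obtain ⟨e⟩ := h1
    have h2 := (s.2.comp e e.injective).map' (f := A.val) Subtype.val_injective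
    have := ia_bound m A (d+1) _ (fun i => Subtype.property _) h2
    omega
  · obtain ⟨b, hb1, hb2, hb3⟩ := exists_linearIndependent ℚ (ia_vec '' ia_exps m A)
    have : Finite b := hb3.finite
    have := Fintype.ofFinite b
    have hex : ∀ x : b, ∃ g ∈ A, g ≠ 0 ∧ ia_vec (m.degree g) = x := by
      intro x
      obtain ⟨a, ⟨g, hg1, hg2, rfl⟩, hx⟩ := hb1 x.2
      exact ⟨g, hg1, hg2, hx⟩
    choose g hg1 hg2 hg3 using hex
    have h1 : AlgebraicIndependent k g := ia_algInd m g hg2 (by simpa only [hg3] using hb3)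
    have h2 : AlgebraicIndependent k (fun x => (⟨g x, hg1 x⟩ : A)) := 
      AlgebraicIndependent.of_comp A.val h1
    have h3 := h2.lift_cardinalMk_le_trdeg
    rw [← hb2, finrank_span_set_eq_card hb3, Set.toFinset_card]
    simpa using h3

theorem ia_exps_add {k : Type*} [Field k] {n : ℕ} (m : MonomialOrder (Fin n))
    (A : Subalgebra k (MvPolynomial (Fin n) k)) {a b : Fin n →₀ ℕ} (ha : a ∈ ia_exps m A)
    (hb : b ∈ ia_exps m A) : a + b ∈ ia_exps m A := by
  obtain ⟨g, hg, hg0, rfl⟩ := ha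
  obtain ⟨h, hh, hh0, rfl⟩ := hb
  exact ⟨g * h, A.mul_mem hg hh, mul_ne_zero hg0 hh0, (m.degree_mul hg0 hh0).symm⟩

theorem ia_exps_zero {k : Type*} [Field k] {n : ℕ} (m : MonomialOrder (Fin n))
    (A : Subalgebra k (MvPolynomial (Fin n) k)) : 0 ∈ ia_exps m A :=
  ⟨1, A.one_mem, one_ne_zero, by simp⟩

/-- The initial algebra. -/
noncomputable def ia_in {k : Type*} [Field k] {n : ℕ} (m : MonomialOrder (Fin n))
    (A : Subalgebra k (MvPolynomial (Fin n) k)) : Subalgebra k (MvPolynomial (Fin n) k) :=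
  Algebra.adjoin k ((fun a => MvPolynomial.monomial a 1) '' ia_exps m A)

theorem ia_in_support {k : Type*} [Field k] {n : ℕ} (m : MonomialOrder (Fin n))
    (A : Subalgebra k (MvPolynomial (Fin n) k)) (p : MvPolynomial (Fin n) k)
    (hp : p ∈ ia_in m A) : ∀ a ∈ p.support, a ∈ ia_exps m A := by
  classical
  induction hp using Algebra.adjoin_induction with
  | mem x hx =>
    obtain ⟨a, ha, rfl⟩ := hx
    intro b hb
    have := MvPolynomial.support_monomial_subset hb
    rw [Finset.mem_singleton] at this
    rwa [this]
  | algebraMap r =>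
    intro b hb
    rw [MvPolynomial.algebraMap_eq, MvPolynomial.C_apply] at hb
    have := MvPolynomial.support_monomial_subset hb
    rw [Finset.mem_singleton] at this
    rw [this]
    exact ia_exps_zero m A
  | add x y _ _ hx hy =>
    intro b hb
    rcases Finset.mem_union.mp (MvPolynomial.support_add hb) with h | h
    · exact hx b h
    · exact hy b h
  | mul x y _ _ hx hy =>
    intro b hb
    obtain ⟨c, hc, d, hd, rfl⟩ := Finset.mem_add.mp (MvPolynomial.support_mul _ _ hb)
    exact ia_exps_add m A (hx c hc) (hy d hd)

theorem ia_exps_in {k : Type*} [Field k] {n : ℕ} (m : MonomialOrder (Fin n))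
    (A : Subalgebra k (MvPolynomial (Fin n) k)) : ia_exps m (ia_in m A) = ia_exps m A := by
  classical
  ext a
  constructor
  · rintro ⟨g, hg, hg0, rfl⟩
    exact ia_in_support m A g hg _ (m.degree_mem_support hg0)
  · intro ha
    refine ⟨MvPolynomial.monomial a 1, Algebra.subset_adjoin ⟨a, ha, rfl⟩, by simp, ?_⟩
    rw [MonomialOrder.degree_monomial]; simp

/-- The Laurent monomial with integral exponent `a`. -/
noncomputable def ia_chi (k : Type*) [Field k] {n : ℕ} (a : Fin n → ℤ) :
    FractionRing (MvPolynomial (Fin n) k) :=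
  ∏ j, (algebraMap (MvPolynomial (Fin n) k) (FractionRing (MvPolynomial (Fin n) k))
    (MvPolynomial.X j)) ^ (a j)

theorem ia_X_ne (k : Type*) [Field k] {n : ℕ} (j : Fin n) :
    algebraMap (MvPolynomial (Fin n) k) (FractionRing (MvPolynomial (Fin n) k))
      (MvPolynomial.X j) ≠ 0 := by
  simp [MvPolynomial.X_ne_zero]

theorem ia_chi_add (k : Type*) [Field k] {n : ℕ} (a b : Fin n → ℤ) :
    ia_chi k (a + b) = ia_chi k a * ia_chi k b := by
  simp [ia_chi, zpow_add₀ (ia_X_ne k _), Finset.prod_mul_distrib]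

theorem ia_chi_neg (k : Type*) [Field k] {n : ℕ} (a : Fin n → ℤ) :
    ia_chi k (-a) = (ia_chi k a)⁻¹ := by
  simp [ia_chi, zpow_neg]

theorem ia_chi_ne (k : Type*) [Field k] {n : ℕ} (a : Fin n → ℤ) : ia_chi k a ≠ 0 :=
  Finset.prod_ne_zero_iff.mpr fun j _ => zpow_ne_zero _ (ia_X_ne k j)

/-- The integral vector attached to an exponent. -/
def ia_zvec {n : ℕ} (a : Fin n →₀ ℕ) : Fin n → ℤ := fun j => (a j : ℤ)

theorem ia_chi_zvec (k : Type*) [Field k] {n : ℕ} (a : Fin n →₀ ℕ) :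
    ia_chi k (ia_zvec a) = algebraMap (MvPolynomial (Fin n) k) _ (MvPolynomial.monomial a 1) := by
  rw [MvPolynomial.monomial_eq, Finsupp.prod_fintype _ _ (by simp)]
  simp [ia_chi, ia_zvec]

theorem ia_dim_in {k : Type*} [Field k] {n : ℕ} (m : MonomialOrder (Fin n))
    (A : Subalgebra k (MvPolynomial (Fin n) k)) (d : ℕ)
    (hd : Algebra.trdeg k (ia_in m A) = d) : ringKrullDim (ia_in m A) = d := by
  classical
  apply le_antisymm (ia_dim_le k _ d hd.le)
  let K := FractionRing (MvPolynomial (Fin n) k)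
  let φ : MvPolynomial (Fin n) k →ₐ[k] K := IsScalarTower.toAlgHom k _ K
  have hφ : Function.Injective φ := IsFractionRing.injective (MvPolynomial (Fin n) k) K
  let e := (ia_in m A).equivMapOfInjective φ hφ
  rw [ringKrullDim_eq_of_ringEquiv e.toRingEquiv]
  obtain ⟨F, hF1, hF2⟩ := (Submodule.fg_span_iff_fg_span_finset_subset (R := ℤ)
    (ia_zvec '' ia_exps m A)).mp (IsNoetherian.noetherian _)
  refine ia_dim_loc k K _ (F.image (ia_chi k)) ?_ ?_ d ?_
  · intro x hx
    obtain ⟨v, hv, rfl⟩ := Finset.mem_image.mp hx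
    refine ⟨?_, ia_chi_ne k v⟩
    obtain ⟨a, ha, rfl⟩ := hF1 hv
    rw [ia_chi_zvec]
    exact ⟨_, Algebra.subset_adjoin ⟨a, ha, rfl⟩, rfl⟩
  · set T := Algebra.adjoin k (((F.image (ia_chi k) : Finset K) : Set K) ∪
      (fun x => x⁻¹) '' ((F.image (ia_chi k) : Finset K) : Set K)) with hT
    have key : ∀ v ∈ Submodule.span ℤ (F : Set (Fin n → ℤ)), ia_chi k v ∈ T ∧ ia_chi k (-v) ∈ T := by
      intro v hv
      rw [← AddSubgroup.toIntSubmodule_closure] at hv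
      change v ∈ AddSubgroup.closure _ at hv
      induction hv using AddSubgroup.closure_induction with
      | mem v hv =>
        have h1 : ia_chi k v ∈ ((F.image (ia_chi k) : Finset K) : Set K) :=
          Finset.mem_coe.mpr (Finset.mem_image_of_mem _ hv)
        refine ⟨Algebra.subset_adjoin (Or.inl h1), ?_⟩
        rw [ia_chi_neg]
        exact Algebra.subset_adjoin (Or.inr ⟨_, h1, rfl⟩)
      | zero =>
        have : ia_chi k (0 : Fin n → ℤ) = 1 := by simp [ia_chi]
        simp only [neg_zero, this]
        exact ⟨T.one_mem, T.one_mem⟩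
      | add v w _ _ hv hw =>
        rw [neg_add, ia_chi_add, ia_chi_add]
        exact ⟨T.mul_mem hv.1 hw.1, T.mul_mem hv.2 hw.2⟩
      | neg v _ hv => rw [neg_neg]; exact hv.symm
    rw [ia_in, AlgHom.map_adjoin, Algebra.adjoin_le_iff]
    rintro _ ⟨_, ⟨a, ha, rfl⟩, rfl⟩
    have h1 := (key (ia_zvec a) (hF2 ▸ Submodule.subset_span ⟨a, ha, rfl⟩)).1
    rw [ia_chi_zvec] at h1
    exact h1
  · rw [← hd]
    exact (e.trdeg_eq).le

/-- let `S = k[f₁,…,f_N]` be a subalgebra of `k[x₁,…,xₙ]` generated by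
homogeneous polynomials, `≺` a monomial order, and `in_≺(S)` the initial algebra of `S`,
generated by the leading monomials of the nonzero elements of `S`.  Then `S` and
`in_≺(S)` have the same Krull dimension and the same transcendence degree over `k`. -/
theorem initial_algebra_dims (k : Type*) [Field k] (n N : ℕ)
    (f : Fin N → MvPolynomial (Fin n) k)
    (hf : ∀ i, ∃ d : ℕ, (f i).IsHomogeneous d)
    (m : MonomialOrder (Fin n))
    (S inS : Subalgebra k (MvPolynomial (Fin n) k))
    (hS : S = Algebra.adjoin k (Set.range f))
    (hinS : inS = Algebra.adjoin k
      {p : MvPolynomial (Fin n) k | ∃ g ∈ S, g ≠ 0 ∧ p = MvPolynomial.monomial (mdeg m g) 1}) :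
    ringKrullDim ↥S = ringKrullDim ↥inS ∧ trdeg k ↥S = trdeg k ↥inS := by
  have hin : inS = ia_in m S := by
    rw [hinS, ia_in]
    congr 1
    ext p
    constructor
    · rintro ⟨g, hg, hg0, rfl⟩
      exact ⟨_, ⟨g, hg, hg0, rfl⟩, rfl⟩
    · rintro ⟨_, ⟨g, hg, hg0, rfl⟩, rfl⟩
      exact ⟨g, hg, hg0, rfl⟩
  have htr : Algebra.trdeg k S = Algebra.trdeg k inS := by
    rw [hin, ia_trdeg_eq m, ia_trdeg_eq m, ia_exps_in]
  refine ⟨?_, htr⟩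
  have : Algebra.FiniteType k S :=
    (Subalgebra.fg_iff_finiteType S).mp (Subalgebra.fg_def.mpr ⟨_, Set.finite_range f, hS.symm⟩)
  obtain ⟨d, hd1, hd2⟩ := ia_fg k S
  rw [hd1]
  rw [htr] at hd2
  subst hin
  exact (ia_dim_in m S d hd2).symm
end
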